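/- Let p > 3 be a prime and let a, b ∈ ℚ_p be nonzero with |b|_p < 1, |a|_p = 1, and (−a_0)^{(p−1)/2} ≡ 1 (mod p). Then the equation x³ + a·x = b has exactly two distinct solutions x ∈ ℚ_p with |x|_p = 1. -/

import Mathlib

theorem aux_zero (p : ℕ) [Fact p.Prime] (x : ℤ_[p]) : PadicInt.toZMod x = 0 ↔ ‖x‖ < 1 := by
  rw [← RingHom.mem_ker, PadicInt.ker_toZMod, IsLocalRing.mem_maximalIdeal, PadicInt.mem_nonunits]

theorem aux_hensel (p : ℕ) [Fact p.Prime] (hp : 3 < p) (A B : ℤ_[p])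
    (hB : PadicInt.toZMod B = 0) (s : ZMod p) (hs : s ≠ 0)
    (hA : s * s = -PadicInt.toZMod A) :
    ∃ z : ℤ_[p], z ^ 3 + A * z = B ∧ PadicInt.toZMod z = s ∧
      ∀ w : ℤ_[p], w ^ 3 + A * w = B → PadicInt.toZMod w = s → w = z := by
  obtain ⟨S, hS⟩ : ∃ S : ℤ_[p], PadicInt.toZMod S = s :=
    ⟨(s.val : ℤ_[p]), by simp⟩
  have hA' : PadicInt.toZMod A = - (s * s) := by rw [hA]; ring
  let F : Polynomial ℤ_[p] := Polynomial.X ^ 3 + Polynomial.C A * Polynomial.X - Polynomial.C B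
  have hF : ∀ z, F.aeval z = z ^ 3 + A * z - B := by
    intro z; simp [F]
  have hF' : ∀ z, F.derivative.aeval z = 3 * z ^ 2 + A := by
    intro z; simp [F]; left; norm_num
  have h2 : (2 : ZMod p) ≠ 0 := by
    intro h
    have h' : ((2 : ℕ) : ZMod p) = 0 := by exact_mod_cast h
    rw [ZMod.natCast_eq_zero_iff] at h'
    have := Nat.le_of_dvd (by norm_num) h'
    omega
  have hd : ‖F.derivative.aeval S‖ = 1 := by
    apply le_antisymm (PadicInt.norm_le_one _)
    by_contra! h
    rw [← aux_zero, hF'] at h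
    simp only [map_add, map_mul, map_pow, hS, hA', map_ofNat] at h
    have : (2 : ZMod p) * (s * s) = 0 := by linear_combination h
    simp_all
  have hn : ‖F.aeval S‖ < ‖F.derivative.aeval S‖ ^ 2 := by
    rw [hd, one_pow, ← aux_zero, hF]
    simp only [map_add, map_sub, map_mul, map_pow, hS, hA', hB]
    ring
  obtain ⟨z, hz, hzS, -, hu⟩ := hensels_lemma hn
  rw [hd] at hzS hu
  refine ⟨z, ?_, ?_, ?_⟩
  · rw [hF] at hz; exact sub_eq_zero.mp hz
  · rw [← aux_zero, map_sub, hS] at hzS; exact sub_eq_zero.mp hzS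
  · intro w hw hws
    apply hu w
    · rw [hF, hw, sub_self]
    · rw [← aux_zero, map_sub, hS, hws, sub_self]

/-- For a prime `p > 3` and nonzero `a b : ℚ_p` with `|b|_p < 1`, `|a|_p = 1`
and `(−a₀)^((p−1)/2) ≡ 1 (mod p)`, the equation `x³ + a·x = b` has exactly two distinct
solutions with `|x|_p = 1`. -/
theorem stmt_11 (p : ℕ) [Fact p.Prime] (hp : 3 < p)
    (a b : ℚ_[p]) (ha : a ≠ 0) (hb : b ≠ 0)
    (hnb : ‖b‖ < 1) (hna : ‖a‖ = 1)
    (a0 : ℕ) (ha0l : 1 ≤ a0) (ha0u : a0 < p)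
    (hdigit : ‖a * (p : ℚ_[p]) ^ (-a.valuation) - (a0 : ℚ_[p])‖ < 1)
    (hres : (-(a0 : ZMod p)) ^ ((p - 1) / 2) = 1) :
    ∃ x y : ℚ_[p], x ≠ y ∧
      (‖x‖ = 1 ∧ x ^ 3 + a * x = b) ∧
      (‖y‖ = 1 ∧ y ^ 3 + a * y = b) ∧
      (∀ w : ℚ_[p], ‖w‖ = 1 → w ^ 3 + a * w = b → w = x ∨ w = y) := by
  have hprime : p.Prime := Fact.out
  have hval : a.valuation = 0 := by
    have h := Padic.norm_eq_zpow_neg_valuation ha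
    rw [hna] at h
    have h1 : (1 : ℝ) < p := by exact_mod_cast hprime.one_lt
    have := (zpow_eq_one_iff_right₀ (by positivity) h1.ne').mp h.symm
    omega
  simp only [hval, neg_zero, zpow_zero, mul_one] at hdigit
  obtain ⟨A, rfl⟩ : ∃ A : ℤ_[p], (A : ℚ_[p]) = a := ⟨⟨a, hna.le⟩, rfl⟩
  obtain ⟨B, rfl⟩ : ∃ B : ℤ_[p], (B : ℚ_[p]) = b := ⟨⟨b, hnb.le⟩, rfl⟩
  have hB : PadicInt.toZMod B = 0 := (aux_zero p B).2 hnb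
  have hA : PadicInt.toZMod A = (a0 : ZMod p) := by
    have h : PadicInt.toZMod (A - (a0 : ℤ_[p])) = 0 := by
      rw [aux_zero, PadicInt.norm_def]
      push_cast
      exact hdigit
    rw [map_sub, map_natCast] at h
    exact sub_eq_zero.mp h
  have ha0 : (a0 : ZMod p) ≠ 0 := by
    intro h
    rw [ZMod.natCast_eq_zero_iff] at h
    have := Nat.le_of_dvd (by omega) h
    omega
  have hhalf : (p - 1) / 2 = p / 2 := by
    have := hprime.odd_of_ne_two (by omega)
    obtain ⟨k, hk⟩ := this
    omega
  rw [hhalf] at hres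
  obtain ⟨s, hs⟩ := (ZMod.euler_criterion p (neg_ne_zero.mpr ha0)).2 hres
  have hs0 : s ≠ 0 := by
    rintro rfl
    simp at hs
    exact ha0 hs
  have h2 : (2 : ZMod p) ≠ 0 := by
    intro h
    have h' : ((2 : ℕ) : ZMod p) = 0 := by exact_mod_cast h
    rw [ZMod.natCast_eq_zero_iff] at h'
    have := Nat.le_of_dvd (by norm_num) h'
    omega
  have hunit : ∀ z : ℤ_[p], PadicInt.toZMod z ≠ 0 → ‖(z : ℚ_[p])‖ = 1 := by
    intro z hz
    apply le_antisymm (PadicInt.norm_le_one z)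
    by_contra! h
    exact hz ((aux_zero p z).2 h)
  obtain ⟨x, hx, hxs, hxu⟩ := aux_hensel p hp A B hB s hs0 (by rw [hA, hs])
  obtain ⟨y, hy, hys, hyu⟩ := aux_hensel p hp A B hB (-s) (neg_ne_zero.mpr hs0)
    (by rw [hA, hs]; ring)
  refine ⟨x, y, ?_, ⟨hunit x (by rwa [hxs]), by rw [← hx]; push_cast; rfl⟩,
    ⟨hunit y (by rw [hys]; exact neg_ne_zero.mpr hs0), by rw [← hy]; push_cast; rfl⟩, ?_⟩
  · intro h
    have h : x = y := Subtype.ext h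
    rw [h, hys] at hxs
    have : (2 : ZMod p) * s = 0 := by linear_combination -hxs
    exact (mul_ne_zero h2 hs0) this
  · intro w hw hwe
    obtain ⟨W, rfl⟩ : ∃ W : ℤ_[p], (W : ℚ_[p]) = w := ⟨⟨w, hw.le⟩, rfl⟩
    have hwe : W ^ 3 + A * W = B := by
      apply Subtype.ext
      push_cast
      exact hwe
    have hW0 : PadicInt.toZMod W ≠ 0 := by
      intro h
      have := (aux_zero p W).1 h
      rw [PadicInt.norm_def, hw] at this
      exact lt_irrefl _ this
    have h := congrArg PadicInt.toZMod hwe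
    simp only [map_add, map_mul, map_pow, hA, hB] at h
    have h3 : PadicInt.toZMod W * ((PadicInt.toZMod W - s) * (PadicInt.toZMod W + s)) = 0 := by
      linear_combination h + PadicInt.toZMod W * hs
    rcases mul_eq_zero.mp ((mul_eq_zero.mp h3).resolve_left hW0) with h4 | h4
    · left
      rw [hxu W hwe (sub_eq_zero.mp h4)]
    · right
      rw [hyu W hwe (eq_neg_of_add_eq_zero_left h4)]
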